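/- Let d,k ≥ 1 and n ≥ 0. Every equivalence class of the relation on T_n given by t ~ t' iff ld(t) ~_k^d ld(t') contains exactly one (d;k)-minimal element. -/

import Mathlib

/-- Full binary trees (every internal node has exactly two children). -/
inductive BTree : Type
  | leaf : BTree
  | node : BTree → BTree → BTree
deriving DecidableEq

namespace BTree

/-- Number of leaves of a full binary tree. -/
def numLeaves : BTree → ℕ
  | leaf => 1
  | node l r => l.numLeaves + r.numLeaves

/-- The list of pairs (left depth, right depth) of the leaves, in preorder. -/
def leafDepths : BTree → List (ℕ × ℕ)
  | leaf => [(0, 0)]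
  | node l r =>
      (l.leafDepths.map fun p => (p.1 + 1, p.2)) ++ (r.leafDepths.map fun p => (p.1, p.2 + 1))

/-- The left depth sequence `ld(t)` of the leaves of `t`, in preorder. -/
def ld (t : BTree) : List ℕ := t.leafDepths.map Prod.fst

/-- The right depth sequence `rd(t)` of the leaves of `t`, in preorder. -/
def rd (t : BTree) : List ℕ := t.leafDepths.map Prod.snd

end BTree

/-- `b ~^d c` : the sequences have equal length and agree at every position where
either entry is `< d`. -/
def DepthEq (d : ℕ) : List ℕ → List ℕ → Prop :=
  List.Forall₂ (fun a b => min a b < d → a = b)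

/-- `b ~_k c` : entrywise congruence mod `k` (and equal length). -/
def ModListEq (k : ℕ) : List ℕ → List ℕ → Prop :=
  List.Forall₂ (fun a b => a % k = b % k)

/-- The relation `t ~ t'` iff `ld(t) ~^d ld(t')` and `rd(t) ~^e rd(t')`. -/
def DeRel (d e : ℕ) (t t' : BTree) : Prop :=
  DepthEq d t.ld t'.ld ∧ DepthEq e t.rd t'.rd

/-- The relation `t ~ t'` iff `ld(t) ~_k^d ld(t')` (i.e. `ld(t) ~_k ld(t')` and
`ld(t) ~^d ld(t')`). -/
def DkRel (d k : ℕ) (t t' : BTree) : Prop :=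
  ModListEq k t.ld t'.ld ∧ DepthEq d t.ld t'.ld

/-- `T_n`: full binary trees with `n+1` leaves. -/
def Tn (n : ℕ) : Type := {t : BTree // t.numLeaves = n + 1}

/-- `C^{d,e}_n`: the number of equivalence classes of the relation `DeRel d e` on `T_n`. -/
noncomputable def Cde (d e n : ℕ) : ℕ :=
  Nat.card (Quot (fun t t' : Tn n => DeRel d e t.1 t'.1))

/-- `C^d_{k,n}`: the number of equivalence classes of `ld(t) ~_k^d ld(t')` on `T_n`. -/
noncomputable def Cdk (d k n : ℕ) : ℕ :=
  Nat.card (Quot (fun t t' : Tn n => DkRel d k t.1 t'.1))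

/-- Directions to a left or right child. -/
inductive Dir : Type
  | L : Dir
  | R : Dir
deriving DecidableEq

/-- The maximal subtree rooted at the node at position `p` (if such a node exists). -/
def subtreeAt : BTree → List Dir → Option BTree
  | t, [] => some t
  | BTree.leaf, _ :: _ => none
  | BTree.node l _, Dir.L :: p => subtreeAt l p
  | BTree.node _ r, Dir.R :: p => subtreeAt r p

/-- Replace the maximal subtree rooted at position `p` by `s` (if the position exists). -/
def replaceAt : BTree → List Dir → BTree → Option BTree
  | _, [], s => some s
  | BTree.leaf, _ :: _, _ => none
  | BTree.node l r, Dir.L :: p, s => (replaceAt l p s).map fun l' => BTree.node l' r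
  | BTree.node l r, Dir.R :: p, s => (replaceAt r p s).map fun r' => BTree.node l r'

/-- `leftAssoc t₀ [t₁,…,t_m] = t₀ ∧ t₁ ∧ ⋯ ∧ t_m` with `∧` performed left to right. -/
def leftAssoc : BTree → List BTree → BTree := List.foldl BTree.node

/-- `t'` is obtained from `t` by a right `k`-rotation at the node at position `p`:
the maximal subtree `t₀ ∧ t₁ ∧ ⋯ ∧ t_{k+1}` rooted there (with `∧` performed left to
right) is replaced by `t₀ ∧ (t₁ ∧ ⋯ ∧ t_{k+1})`.  The left depth of that node is
`p.count Dir.L`. -/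
def IsRightKRot (k : ℕ) (p : List Dir) (t t' : BTree) : Prop :=
  ∃ (t₀ t₁ : BTree) (rest : List BTree), rest.length = k ∧
    subtreeAt t p = some (leftAssoc t₀ (t₁ :: rest)) ∧
    replaceAt t p (BTree.node t₀ (leftAssoc t₁ rest)) = some t'

/-- `IsTopOf s u`: `s` is a subtree of `u` rooted at the root of `u`. -/
def IsTopOf : BTree → BTree → Prop
  | BTree.leaf, _ => True
  | BTree.node l r, BTree.node l' r' => IsTopOf l l' ∧ IsTopOf r r'
  | BTree.node _ _, BTree.leaf => False

/-- `t` contains `s` at left depth `δ`: `t` has a subtree equal to `s` rooted at a node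
of left depth `δ`. -/
def ContainsAt (t s : BTree) (δ : ℕ) : Prop :=
  ∃ (p : List Dir) (u : BTree), subtreeAt t p = some u ∧ p.count Dir.L = δ ∧ IsTopOf s u

/-- `t` avoids `s` at left depth `δ`. -/
def AvoidsAt (t s : BTree) (δ : ℕ) : Prop := ¬ ContainsAt t s δ

/-- `comb_k`: the left-to-right `∧`-product of `k+1` single leaves. -/
def comb (k : ℕ) : BTree := leftAssoc BTree.leaf (List.replicate k BTree.leaf)

/-- `comb_k^1 := t₀ ∧ comb_k` with `t₀` a single leaf. -/
def comb1 (k : ℕ) : BTree := BTree.node BTree.leaf (comb k)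

/-- One left `k`-rotation step, at a node of left depth at least `d-1`, from `t` to `t'`. -/
def LeftRotStep (d k : ℕ) (t t' : BTree) : Prop :=
  ∃ p : List Dir, d - 1 ≤ p.count Dir.L ∧ IsRightKRot k p t' t

/-- The `(d;k)`-order: `s ≤ t` iff `s` is obtained from `t` by finitely many left
`k`-rotations at nodes of left depth at least `d-1`. -/
def dkLE (d k : ℕ) (s t : BTree) : Prop := Relation.ReflTransGen (LeftRotStep d k) t s

/-- `t` is `(d;k)`-minimal. -/
def dkMinimal (d k : ℕ) (t : BTree) : Prop := ∀ s, dkLE d k s t → s = t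

/-- `t` is `(d;k)`-maximal. -/
def dkMaximal (d k : ℕ) (t : BTree) : Prop := ∀ s, dkLE d k t s → s = t

/-!
A left `k`-rotation from `t₀ ∧ (t₁ ∧ ⋯ ∧ t_{k+1})` to `t₀ ∧ t₁ ∧ ⋯ ∧ t_{k+1}` at a node of left
depth at least `d - 1` changes only the left depths of the leaves of `t₀`: they grow by `k` and were
already at least `d`, so the class of `ld` is unchanged. The sum of the right depths drops, hence
rotating left terminates at a minimal element of the class.

If no left `k`-rotation applies, every right subtree rooted at left depth at least `d - 1` has a
left spine with fewer than `k` edges, so consecutive left depths `x, y` satisfy `x ≤ y + 1`, and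
`y + 1 < x + k` when `d ≤ x`. Given `y`, this leaves at most one value of `x ≥ d` in each residue
class modulo `k`. Since `ld` ends in `0`, it can be recovered from right to left from its class, and
`ld` determines the tree.

The left depth of a node of `l` is one larger in `node l r`, so a condition with threshold `d` on
`node l r` becomes one with threshold `d - 1` on `l` and `d` on `r`, and structural induction
applies with `d` varying. Thresholds `0` and `1` allow the same rotations, as `d - 1` is truncated.
-/

section Lists

variable {α : Type*} {R S : α → α → Prop}

theorem forall₂_trans (hR : ∀ a b c, R a b → R b c → R a c) {l₁ l₂ l₃ : List α}
    (h : List.Forall₂ R l₁ l₂) (h' : List.Forall₂ R l₂ l₃) : List.Forall₂ R l₁ l₃ := by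
  induction h generalizing l₃ with
  | nil => exact h'
  | cons hab _ ih =>
    cases h' with
    | cons hbc htail => exact .cons (hR _ _ _ hab hbc) (ih htail)

theorem forall₂_equivalence (hR : Equivalence R) : Equivalence (List.Forall₂ R) where
  refl _ := List.forall₂_same.2 fun a _ => hR.refl a
  symm h := (h.imp fun _ _ => hR.symm).flip
  trans := forall₂_trans (R := R) fun _ _ _ => hR.trans

theorem eq_of_forall₂_of_isChain (hRS : ∀ {x y z}, R x y → S x z → S y z → x = y)
    {b c : List α} (h : List.Forall₂ R b c) (hb : b.IsChain S) (hc : c.IsChain S)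
    (hlast : b.getLast? = c.getLast?) : b = c := by
  induction h with
  | nil => rfl
  | cons hxy htail ih =>
    cases htail with
    | nil => simpa using hlast
    | cons _ _ =>
      have htails := ih hb.tail hc.tail (by simpa using hlast)
      rw [htails] at hb ⊢
      rw [hRS hxy hb.rel hc.rel]

end Lists

namespace BTree

@[simp] theorem ld_leaf : leaf.ld = [0] := rfl

@[simp] theorem ld_node (l r : BTree) : (node l r).ld = l.ld.map (· + 1) ++ r.ld := by
  simp [ld, leafDepths, Function.comp_def]

@[simp] theorem rd_leaf : leaf.rd = [0] := rfl

@[simp] theorem rd_node (l r : BTree) : (node l r).rd = l.rd ++ r.rd.map (· + 1) := by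
  simp [rd, leafDepths, Function.comp_def]

@[simp] theorem length_ld (t : BTree) : t.ld.length = t.numLeaves := by
  induction t with
  | leaf => rfl
  | node l r ihl ihr => simp [numLeaves, ihl, ihr]

@[simp] theorem length_rd (t : BTree) : t.rd.length = t.numLeaves := by
  rw [← length_ld, rd, ld, List.length_map, List.length_map]

theorem sum_rd_node (l r : BTree) :
    (node l r).rd.sum = l.rd.sum + r.rd.sum + r.numLeaves := by
  simp [List.sum_map_add, add_assoc]

theorem ld_ne_nil (t : BTree) : t.ld ≠ [] := by
  induction t <;> simp [*]

theorem rd_ne_nil (t : BTree) : t.rd ≠ [] := by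
  induction t <;> simp [*]

theorem getLast?_ld (t : BTree) : t.ld.getLast? = some 0 := by
  induction t with
  | leaf => rfl
  | node l r _ ihr => simp [List.getLast?_append, ihr]

theorem head?_ld_node (l r : BTree) : (node l r).ld.head? = l.ld.head?.map (· + 1) := by
  rw [ld_node, List.head?_append_of_ne_nil _ (by simp [l.ld_ne_nil]), List.head?_map]

theorem map_ld_node_append_ne_cons (l r : BTree) (δ : ℕ) (u u' : List ℕ) :
    (node l r).ld.map (· + δ) ++ u ≠ δ :: u' := by
  obtain ⟨x, xs, hl⟩ := List.exists_cons_of_ne_nil l.ld_ne_nil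
  simp [hl]

-- The left depth sequences of trees rooted at a common left depth `δ` form a prefix code.
theorem eq_and_eq_of_map_ld_append_eq {t t' : BTree} {δ : ℕ} {u u' : List ℕ}
    (h : t.ld.map (· + δ) ++ u = t'.ld.map (· + δ) ++ u') : t = t' ∧ u = u' := by
  induction t generalizing t' δ u u' with
  | leaf =>
    cases t' with
    | leaf => simpa using h
    | node l' r' =>
      exact absurd (by simpa using h.symm) (map_ld_node_append_ne_cons l' r' δ u' u)
  | node l r ihl ihr =>
    cases t' with
    | leaf => exact absurd (by simpa using h) (map_ld_node_append_ne_cons l r δ u u')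
    | node l' r' =>
      simp only [ld_node, List.map_append, List.map_map, List.append_assoc, Function.comp_def,
        add_assoc] at h
      obtain ⟨rfl, hr⟩ := ihl h
      obtain ⟨rfl, rfl⟩ := ihr hr
      exact ⟨rfl, rfl⟩

theorem ld_injective : Function.Injective ld := fun t t' h =>
  (eq_and_eq_of_map_ld_append_eq (δ := 0) (u := []) (u' := []) (by simpa using h)).1

end BTree

open BTree

@[simp] theorem leftAssoc_nil (t : BTree) : leftAssoc t [] = t := rfl

theorem leftAssoc_cons (s t : BTree) (rest : List BTree) :
    leftAssoc s (t :: rest) = leftAssoc (node s t) rest := rfl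

@[simp] theorem leftAssoc_concat (t b : BTree) (rest : List BTree) :
    leftAssoc t (rest ++ [b]) = node (leftAssoc t rest) b := by
  simp [leftAssoc]

theorem ld_leftAssoc_cons (s t : BTree) (rest : List BTree) :
    (leftAssoc s (t :: rest)).ld = s.ld.map (· + (rest.length + 1)) ++ (leftAssoc t rest).ld := by
  induction rest using List.reverseRecOn with
  | nil => simp [leftAssoc_cons]
  | append_singleton rest b ih =>
    rw [← List.cons_append, leftAssoc_concat, ld_node, ih]
    simp [Function.comp_def, add_assoc]

theorem rd_leftAssoc (t : BTree) (rest : List BTree) :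
    (leftAssoc t rest).rd = t.rd ++ rest.flatMap fun s => s.rd.map (· + 1) := by
  induction rest using List.reverseRecOn with
  | nil => simp
  | append_singleton rest b ih => simp [ih]

theorem exists_eq_leftAssoc_of_le_head {k x : ℕ} {t : BTree} (hx : x ∈ t.ld.head?) (hk : k ≤ x) :
    ∃ (t₁ : BTree) (rest : List BTree), rest.length = k ∧ t = leftAssoc t₁ rest := by
  induction k generalizing t x with
  | zero => exact ⟨t, [], rfl, rfl⟩
  | succ k ih =>
    cases t with
    | leaf => simp only [ld_leaf, List.head?_cons, Option.mem_some_iff] at hx; omega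
    | node l r =>
      rw [head?_ld_node, Option.mem_map] at hx
      obtain ⟨y, hy, rfl⟩ := hx
      obtain ⟨t₁, rest, hlen, rfl⟩ := ih hy (by omega)
      exact ⟨t₁, rest ++ [r], by simp [hlen], by simp⟩

/-- The relation that `~_k^d` requires between the two entries at each position. -/
def DkEntryRel (d k a b : ℕ) : Prop :=
  a ≡ b [MOD k] ∧ (min a b < d → a = b)

theorem dkEntryRel_equivalence (d k : ℕ) : Equivalence (DkEntryRel d k) where
  refl _ := ⟨rfl, fun _ => rfl⟩
  symm h := ⟨h.1.symm, fun hlt => (h.2 (by omega)).symm⟩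
  trans h h' := ⟨h.1.trans h'.1, by have := h.2; have := h'.2; omega⟩

theorem dkRel_iff_forall₂ {d k : ℕ} {s t : BTree} :
    DkRel d k s t ↔ List.Forall₂ (DkEntryRel d k) s.ld t.ld :=
  ⟨fun h => List.Forall₂.mp (fun _ _ => And.intro) h.1 h.2,
    fun h => ⟨h.imp fun _ _ => And.left, h.imp fun _ _ => And.right⟩⟩

theorem dkRel_equivalence (d k : ℕ) : Equivalence (DkRel d k) := by
  have hld := (forall₂_equivalence (dkEntryRel_equivalence d k)).comap BTree.ld
  constructor <;> simp only [dkRel_iff_forall₂]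
  exacts [hld.refl, hld.symm, hld.trans]

namespace DkRel

variable {d k : ℕ} {l l' r r' s t : BTree}

theorem numLeaves_eq (h : DkRel d k s t) : s.numLeaves = t.numLeaves := by
  simpa only [length_ld] using h.1.length_eq

theorem node (hl : DkRel (d - 1) k l l') (hr : DkRel d k r r') :
    DkRel d k (node l r) (node l' r') := by
  rw [dkRel_iff_forall₂] at hl hr ⊢
  simp only [ld_node]
  refine List.rel_append ?_ hr
  rw [List.forall₂_map_left_iff, List.forall₂_map_right_iff]
  exact hl.imp fun a b h => ⟨h.1.add_right 1, by have := h.2; omega⟩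

end DkRel

theorem dkRel_leftAssoc_cons {d : ℕ} (hd : d ≤ 1) (t₀ t₁ : BTree) (rest : List BTree) :
    DkRel d rest.length (leftAssoc t₀ (t₁ :: rest)) (node t₀ (leftAssoc t₁ rest)) := by
  rw [dkRel_iff_forall₂, ld_leftAssoc_cons, ld_node]
  refine List.rel_append ?_ ((forall₂_equivalence (dkEntryRel_equivalence _ _)).refl _)
  rw [List.forall₂_map_left_iff, List.forall₂_map_right_iff, List.forall₂_same]
  exact fun a _ => ⟨by simp [Nat.ModEq, add_left_comm a], by omega⟩

theorem sum_rd_leftAssoc_cons_lt (t₀ t₁ : BTree) {rest : List BTree} (hrest : rest ≠ []) :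
    (leftAssoc t₀ (t₁ :: rest)).rd.sum < (node t₀ (leftAssoc t₁ rest)).rd.sum := by
  set tail := rest.flatMap fun s => s.rd.map (· + 1) with htail
  have hleft : (leftAssoc t₀ (t₁ :: rest)).rd = t₀.rd ++ (t₁.rd.map (· + 1) ++ tail) := by
    rw [rd_leftAssoc, List.flatMap_cons]
  have hright : (node t₀ (leftAssoc t₁ rest)).rd =
      t₀.rd ++ (t₁.rd.map (· + 1) ++ tail.map (· + 1)) := by
    rw [rd_node, rd_leftAssoc, List.map_append]
  have hpos : 0 < tail.length := by
    obtain ⟨t₂, _, rfl⟩ := List.exists_cons_of_ne_nil hrest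
    exact List.length_pos_iff.2 (by simp [htail, rd_ne_nil])
  have hsum : tail.sum < (tail.map (· + 1)).sum := by
    simpa [List.sum_map_add] using hpos
  simpa only [hleft, hright, List.sum_append, add_lt_add_iff_left] using hsum

namespace LeftRotStep

variable {d k : ℕ} {l l' r r' t t' : BTree}

theorem root (hd : d ≤ 1) (t₀ t₁ : BTree) {rest : List BTree} (hlen : rest.length = k) :
    LeftRotStep d k (BTree.node t₀ (leftAssoc t₁ rest)) (leftAssoc t₀ (t₁ :: rest)) :=
  ⟨[], by simp [hd], t₀, t₁, rest, hlen, by simp [subtreeAt], by simp [replaceAt]⟩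

theorem node_left (h : LeftRotStep (d - 1) k l l') (r : BTree) :
    LeftRotStep d k (BTree.node l r) (BTree.node l' r) := by
  obtain ⟨p, hp, t₀, t₁, rest, hlen, hsub, hrep⟩ := h
  exact ⟨.L :: p, by rw [List.count_cons_self]; omega, t₀, t₁, rest, hlen, hsub,
    by simp [replaceAt, hrep]⟩

theorem node_right (l : BTree) (h : LeftRotStep d k r r') :
    LeftRotStep d k (BTree.node l r) (BTree.node l r') := by
  obtain ⟨p, hp, t₀, t₁, rest, hlen, hsub, hrep⟩ := h
  exact ⟨.R :: p, by simpa using hp, t₀, t₁, rest, hlen, hsub, by simp [replaceAt, hrep]⟩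

@[elab_as_elim]
theorem induction {motive : ∀ {d t t'}, LeftRotStep d k t t' → Prop}
    (root : ∀ {d} (hd : d ≤ 1) (t₀ t₁) {rest : List BTree} (hlen : rest.length = k),
      motive (LeftRotStep.root hd t₀ t₁ hlen))
    (node_left : ∀ {d l l'} (hl : LeftRotStep (d - 1) k l l') (r), motive hl →
      motive (hl.node_left r))
    (node_right : ∀ {d r r'} (l) (hr : LeftRotStep d k r r'), motive hr →
      motive (hr.node_right l))
    (h : LeftRotStep d k t t') : motive h := by
  obtain ⟨p, hp, t₀, t₁, rest, hlen, hsub, hrep⟩ := h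
  induction p generalizing d t t' with
  | nil =>
    obtain rfl : t' = leftAssoc t₀ (t₁ :: rest) := by simpa [subtreeAt] using hsub
    obtain rfl : BTree.node t₀ (leftAssoc t₁ rest) = t := by simpa [replaceAt] using hrep
    exact root (Nat.sub_eq_zero_iff_le.1 (by simpa using hp)) t₀ t₁ hlen
  | cons dir p ih =>
    cases t' with
    | leaf => simp [subtreeAt] at hsub
    | node l' r' =>
      cases dir with
      | L =>
        obtain ⟨l, hl, rfl⟩ := Option.map_eq_some_iff.1 hrep
        have hp : d - 1 - 1 ≤ p.count .L := by rw [List.count_cons_self] at hp; omega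
        exact node_left ⟨p, hp, t₀, t₁, rest, hlen, hsub, hl⟩ r' (ih hp hsub hl)
      | R =>
        obtain ⟨r, hr, rfl⟩ := Option.map_eq_some_iff.1 hrep
        have hp : d - 1 ≤ p.count .L := by simpa using hp
        exact node_right l' ⟨p, hp, t₀, t₁, rest, hlen, hsub, hr⟩ (ih hp hsub hr)

theorem dkRel (h : LeftRotStep d k t t') : DkRel d k t' t := by
  induction h using LeftRotStep.induction with
  | root hd t₀ t₁ hlen => exact hlen ▸ dkRel_leftAssoc_cons hd t₀ t₁ _
  | node_left _ r ih => exact ih.node ((dkRel_equivalence _ k).refl r)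
  | node_right l _ ih => exact DkRel.node ((dkRel_equivalence _ k).refl l) ih

theorem sum_rd_lt (hk : 1 ≤ k) (h : LeftRotStep d k t t') : t'.rd.sum < t.rd.sum := by
  induction h using LeftRotStep.induction with
  | root _ t₀ t₁ hlen => exact sum_rd_leftAssoc_cons_lt t₀ t₁ (List.ne_nil_of_length_pos (by omega))
  | node_left _ r ih => simpa only [sum_rd_node, add_lt_add_iff_right] using ih
  | node_right l hr ih =>
    simpa only [sum_rd_node, hr.dkRel.numLeaves_eq, add_lt_add_iff_left, add_lt_add_iff_right]
      using ih

end LeftRotStep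

theorem dkRel_of_dkLE {d k : ℕ} {s t : BTree} (h : dkLE d k s t) : DkRel d k s t := by
  induction h with
  | refl => exact (dkRel_equivalence d k).refl t
  | tail _ hstep ih => exact (dkRel_equivalence d k).trans hstep.dkRel ih

section Minimal

variable {d k : ℕ}

theorem dkMinimal_iff_forall_not_leftRotStep (hk : 1 ≤ k) {t : BTree} :
    dkMinimal d k t ↔ ∀ t', ¬ LeftRotStep d k t t' := by
  constructor
  · intro hmin t' hstep
    exact (hstep.sum_rd_lt hk).ne (by rw [hmin t' (.single hstep)])
  · intro hstuck s hs
    rcases hs.cases_head with heq | ⟨t', hstep, _⟩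
    · exact heq.symm
    · exact absurd hstep (hstuck t')

theorem exists_dkLE_dkMinimal (hk : 1 ≤ k) (t : BTree) : ∃ s, dkLE d k s t ∧ dkMinimal d k s := by
  obtain ⟨s, hs, hleast⟩ := (measure fun s : BTree => s.rd.sum).wf.has_min {s | dkLE d k s t}
    ⟨t, .refl⟩
  refine ⟨s, hs, (dkMinimal_iff_forall_not_leftRotStep hk).2 fun s' hstep => ?_⟩
  exact hleast s' (hs.tail hstep) (hstep.sum_rd_lt hk)

/-- The condition on consecutive left depths `x, y` in a tree that admits no left `k`-rotation at
a node of left depth at least `d - 1`. With `y + 1 < x + k` instead of `y < x + k - 1`, no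
subtraction is truncated. -/
def IsReducedPair (d k x y : ℕ) : Prop :=
  x ≤ y + 1 ∧ (d ≤ x → y + 1 < x + k)

theorem DkEntryRel.eq_of_isReducedPair {x y z : ℕ} (h : DkEntryRel d k x y)
    (hx : IsReducedPair d k x z) (hy : IsReducedPair d k y z) : x = y := by
  by_cases hlt : min x y < d
  · exact h.2 hlt
  · have hxz := hx.2 (by omega)
    have hyz := hy.2 (by omega)
    have hxz' := hx.1
    have hyz' := hy.1
    exact h.1.eq_of_abs_lt (by rw [abs_lt]; omega)

theorem isChain_isReducedPair_ld {t : BTree} (h : ∀ t', ¬ LeftRotStep d k t t') :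
    t.ld.IsChain (IsReducedPair d k) := by
  induction t generalizing d with
  | leaf => simp
  | node l r ihl ihr =>
    rw [ld_node, List.isChain_append, List.isChain_map]
    refine ⟨?_, ihr fun r' hstep => h _ (hstep.node_right l), ?_⟩
    · exact (ihl fun l' hstep => h _ (hstep.node_left r)).imp fun a b hab =>
        ⟨by have := hab.1; omega, by have := hab.2; omega⟩
    · intro x hx y hy
      obtain rfl : 1 = x := by simpa [getLast?_ld] using hx
      refine ⟨by omega, fun hd => ?_⟩
      by_contra hlt
      obtain ⟨t₁, rest, rfl, rfl⟩ := exists_eq_leftAssoc_of_le_head (k := k) hy (by omega)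
      exact h _ (.root hd l t₁ rfl)

theorem dkMinimal.eq_of_dkRel (hk : 1 ≤ k) {s t : BTree} (hs : dkMinimal d k s)
    (ht : dkMinimal d k t) (h : DkRel d k s t) : s = t := by
  rw [dkMinimal_iff_forall_not_leftRotStep hk] at hs ht
  apply ld_injective
  exact eq_of_forall₂_of_isChain DkEntryRel.eq_of_isReducedPair (dkRel_iff_forall₂.1 h)
    (isChain_isReducedPair_ld hs) (isChain_isReducedPair_ld ht)
    (by rw [getLast?_ld, getLast?_ld])

end Minimal

/-- for `d,k ≥ 1` and `n ≥ 0`, every equivalence class of the relation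
`t ~ t'` iff `ld(t) ~_k^d ld(t')` on `T_n` contains exactly one `(d;k)`-minimal element. -/
theorem stmt11 (d k n : ℕ) (hd : 1 ≤ d) (hk : 1 ≤ k) (t : BTree)
    (ht : t.numLeaves = n + 1) :
    ∃! s : BTree, s.numLeaves = n + 1 ∧ DkRel d k s t ∧ dkMinimal d k s := by
  obtain ⟨s, hle, hmin⟩ := exists_dkLE_dkMinimal (d := d) hk t
  have hrel : DkRel d k s t := dkRel_of_dkLE hle
  refine ⟨s, ⟨hrel.numLeaves_eq.trans ht, hrel, hmin⟩, ?_⟩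
  rintro s' ⟨_, hrel', hmin'⟩
  have hequiv := dkRel_equivalence d k
  exact hmin'.eq_of_dkRel hk hmin (hequiv.trans hrel' (hequiv.symm hrel))
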